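/- Let k be a field of characteristic 0, q in k a nonzero element, and n > 1. Then the Gaussian binomial coefficients binom(n,i)_q vanish for all 1 ≤ i ≤ n-1 if and only if q has multiplicative order exactly n. -/

import Mathlib

/-- The Gaussian (`q`-)binomial coefficient `binom(n,i)_q`, i.e. the evaluation at `q`
of the Gaussian binomial polynomial over `ℤ`, defined via the `q`-Pascal recursion. -/
def qBinom {k : Type*} [Field k] (q : k) : ℕ → ℕ → k
  | _, 0 => 1
  | 0, _ + 1 => 0
  | n + 1, i + 1 => q ^ (i + 1) * qBinom q n (i + 1) + qBinom q n i

/-!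
Gauss's `q`-binomial theorem says that, up to powers of `q` and signs, the `qBinom q n i` are the
coefficients of `∏ j < n, (X - q ^ j)`. Hence the middle ones vanish exactly when this product is
`X ^ n - 1`, that is, when `1, q, …, q ^ (n - 1)` are the `n` roots of `X ^ n - 1`. When `n ≠ 0`
in `k` that polynomial is separable, so the listed roots are distinct and `q` has order `n`.
-/

open Finset Polynomial

section GaussianBinomial

variable {k : Type*} [Field k] (q : k)

theorem qBinom_zero_right (n : ℕ) : qBinom q n 0 = 1 := by
  cases n <;> rfl

theorem qBinom_eq_zero_of_lt {n i : ℕ} (h : n < i) : qBinom q n i = 0 := by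
  induction n generalizing i with
  | zero => obtain ⟨i, rfl⟩ := Nat.exists_eq_succ_of_ne_zero h.ne'; rfl
  | succ n ih =>
    obtain ⟨i, rfl⟩ := Nat.exists_eq_succ_of_ne_zero (Nat.ne_zero_of_lt h)
    rw [qBinom, ih (by omega), ih (by omega), mul_zero, add_zero]

theorem pow_choose_two_mul_qBinom_succ_succ (n i : ℕ) :
    q ^ (i + 1).choose 2 * qBinom q (n + 1) (i + 1) =
      q ^ (i + 1).choose 2 * qBinom q n (i + 1) * q ^ (i + 1) +
        q ^ i.choose 2 * qBinom q n i * q ^ i := by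
  rw [qBinom, Nat.choose_succ_succ' i 1, Nat.choose_one_right]
  ring

theorem prod_range_add_pow_smul {A : Type*} [CommSemiring A] [Algebra k A] (x y : A) (n : ℕ) :
    ∏ j ∈ range n, (x + q ^ j • y) =
      ∑ p ∈ antidiagonal n, (q ^ p.1.choose 2 * qBinom q n p.1) • (y ^ p.1 * x ^ p.2) := by
  induction n generalizing y with
  | zero => simp [qBinom_zero_right]
  | succ n ih =>
    let c (i : ℕ) : k := q ^ i.choose 2 * qBinom q n i * q ^ i
    have c_zero : c 0 = 1 := by simp [c, qBinom_zero_right]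
    have c_last : c (n + 1) = 0 := by simp [c, qBinom_eq_zero_of_lt]
    have shift : ∑ p ∈ antidiagonal n, c p.1 • (y ^ p.1 * x ^ (p.2 + 1)) =
        x ^ (n + 1) + ∑ p ∈ antidiagonal n, c (p.1 + 1) • (y ^ (p.1 + 1) * x ^ p.2) := by
      have h := (Nat.sum_antidiagonal_succ' (n := n)
        (f := fun p : ℕ × ℕ ↦ c p.1 • (y ^ p.1 * x ^ p.2))).symm.trans Nat.sum_antidiagonal_succ
      simpa [c_zero, c_last] using h
    calc ∏ j ∈ range (n + 1), (x + q ^ j • y)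
      _ = (∏ j ∈ range n, (x + q ^ j • q • y)) * (x + y) := by
        simp [prod_range_succ', pow_succ, mul_smul]
      _ = (∑ p ∈ antidiagonal n, c p.1 • (y ^ p.1 * x ^ p.2)) * (x + y) := by
        rw [ih]
        simp only [_root_.smul_pow, smul_mul_assoc, smul_smul, c]
      _ = ∑ p ∈ antidiagonal n, c p.1 • (y ^ p.1 * x ^ (p.2 + 1)) +
          ∑ p ∈ antidiagonal n, c p.1 • (y ^ (p.1 + 1) * x ^ p.2) := by
        simp only [mul_add, sum_mul, smul_mul_assoc, pow_succ, mul_assoc, mul_comm y]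
      _ = x ^ (n + 1) +
          ∑ p ∈ antidiagonal n, (c (p.1 + 1) + c p.1) • (y ^ (p.1 + 1) * x ^ p.2) := by
        simp only [shift, add_smul, sum_add_distrib, add_assoc]
      _ = ∑ p ∈ antidiagonal (n + 1),
          (q ^ p.1.choose 2 * qBinom q (n + 1) p.1) • (y ^ p.1 * x ^ p.2) := by
        simp [Nat.sum_antidiagonal_succ, pow_choose_two_mul_qBinom_succ_succ, qBinom_zero_right, c]

theorem prod_X_sub_C_pow_eq_sum (n : ℕ) :
    ∏ j ∈ range n, (X - C (q ^ j)) =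
      ∑ p ∈ antidiagonal n, C ((-1) ^ p.1 * (q ^ p.1.choose 2 * qBinom q n p.1)) * X ^ p.2 := by
  have h := prod_range_add_pow_smul q (X : k[X]) (-1) n
  simpa [smul_eq_C_mul, sub_eq_add_neg, mul_assoc, mul_left_comm] using h

theorem coeff_prod_X_sub_C_pow (i j : ℕ) :
    (∏ l ∈ range (i + j), (X - C (q ^ l))).coeff j =
      (-1) ^ i * (q ^ i.choose 2 * qBinom q (i + j) i) := by
  rw [prod_X_sub_C_pow_eq_sum, finsetSum_coeff, sum_eq_single_of_mem (i, j) (by simp)]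
  · simp only [coeff_C_mul, coeff_X_pow_self, mul_one]
  · rintro ⟨a, b⟩ hab hne
    rw [HasAntidiagonal.mem_antidiagonal] at hab
    have hjb : j ≠ b := by rintro rfl; exact hne (by simp; omega)
    rw [coeff_C_mul, coeff_X_pow, if_neg hjb, mul_zero]

variable {q}

theorem prod_X_sub_C_pow_eq_X_pow_sub_one {n : ℕ} (hn : n ≠ 0)
    (h : ∀ i, 1 ≤ i → i ≤ n - 1 → qBinom q n i = 0) :
    ∏ j ∈ range n, (X - C (q ^ j)) = X ^ n - 1 := by
  obtain ⟨m, rfl⟩ := Nat.exists_eq_succ_of_ne_zero hn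
  obtain ⟨a, ha⟩ : ∃ a, ∏ j ∈ range (m + 1), (X - C (q ^ j)) = X ^ (m + 1) + C a := by
    refine ⟨(-1) ^ (m + 1) * (q ^ (m + 1).choose 2 * qBinom q (m + 1) (m + 1)), ?_⟩
    rw [prod_X_sub_C_pow_eq_sum, Nat.sum_antidiagonal_succ, sum_eq_single_of_mem (m, 0) (by simp)]
    · simp [qBinom_zero_right]
    · rintro ⟨i, j⟩ hij hne
      rw [HasAntidiagonal.mem_antidiagonal] at hij
      have him : i ≠ m := by rintro rfl; exact hne (by simp; omega)
      simp [h (i + 1) (by omega) (by omega)]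
  have eval_one : 1 + a = 0 := by
    simpa [prod_range_succ', eq_comm] using congrArg (eval 1) ha
  rw [ha, eq_neg_of_add_eq_zero_right eval_one, C_neg, C_1, sub_eq_add_neg]

theorem orderOf_eq_of_prod_X_sub_C_pow_eq_X_pow_sub_one {n : ℕ} (hn : 1 < n)
    (hnk : (n : k) ≠ 0) (h : ∏ j ∈ range n, (X - C (q ^ j)) = X ^ n - 1) :
    orderOf q = n := by
  have pow_eq_one : q ^ n = 1 := by
    have root : eval q (∏ j ∈ range n, (X - C (q ^ j))) = 0 := by
      rw [eval_prod]
      exact prod_eq_zero (mem_range.2 hn) (by simp)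
    rw [h] at root
    simpa [sub_eq_zero] using root
  have separable : (∏ j ∈ range n, (X - C (q ^ j))).Separable :=
    h ▸ X_pow_sub_one_separable_iff.2 hnk
  refine (orderOf_eq_iff (by omega)).2 ⟨pow_eq_one, fun d hdn hd hqd ↦ hd.ne' ?_⟩
  have pow_eq_pow_zero : q ^ d = q ^ 0 := by rw [hqd, pow_zero]
  exact separable.inj_of_prod_X_sub_C (mem_range.2 hdn) (mem_range.2 (by omega)) pow_eq_pow_zero

theorem qBinom_eq_zero_of_isPrimitiveRoot {n i : ℕ} (hq : IsPrimitiveRoot q n) (hi : 0 < i)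
    (hin : i < n) : qBinom q n i = 0 := by
  obtain ⟨j, rfl⟩ := Nat.exists_eq_add_of_le hin.le
  have prod_eq : ∏ l ∈ range (i + j), (X - C (q ^ l)) = X ^ (i + j) - 1 := by
    simpa using (X_pow_sub_C_eq_prod hq (by omega) (one_pow _)).symm
  have coeff_eq_zero : (-1) ^ i * (q ^ i.choose 2 * qBinom q (i + j) i) = 0 := by
    rw [← coeff_prod_X_sub_C_pow, prod_eq, coeff_sub, coeff_X_pow, coeff_one,
      if_neg (by omega), if_neg (by omega), sub_zero]
  simpa [hq.ne_zero (by omega)] using coeff_eq_zero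

theorem qBinom_eq_zero_iff_orderOf_general {n : ℕ} (hn : 1 < n) (hnk : (n : k) ≠ 0) :
    (∀ i, 1 ≤ i → i ≤ n - 1 → qBinom q n i = 0) ↔ orderOf q = n := by
  constructor
  · intro h
    exact orderOf_eq_of_prod_X_sub_C_pow_eq_X_pow_sub_one hn hnk
      (prod_X_sub_C_pow_eq_X_pow_sub_one (by omega) h)
  · intro h i hi hin
    exact qBinom_eq_zero_of_isPrimitiveRoot (h ▸ IsPrimitiveRoot.orderOf q) hi (by omega)

end GaussianBinomial

/-- In characteristic `0`, for `q ≠ 0` and `n > 1`, all the Gaussian binomial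
coefficients `binom(n,i)_q`, `1 ≤ i ≤ n-1`, vanish iff `q` has multiplicative
order exactly `n`. -/
theorem qBinom_eq_zero_iff_orderOf {k : Type*} [Field k] [CharZero k]
    (q : k) (hq : q ≠ 0) (n : ℕ) (hn : 1 < n) :
    (∀ i, 1 ≤ i → i ≤ n - 1 → qBinom q n i = 0) ↔ orderOf q = n := by
  exact qBinom_eq_zero_iff_orderOf_general hn (Nat.cast_ne_zero.2 (by omega))
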